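/- Let m ≥ 3 and let A ≥ 0, B be integers with 16A + 8B - B² ≥ 0 and B ≢ 0 mod 4. Then there exist integers x₁, x₂, x₃, x₄ with P_m(x₁) + 2P_m(x₂) + 2P_m(x₃) + 3P_m(x₄) = A(m-2) + B. -/

import Mathlib

/-- The generalized `m`-gonal number `P_m(x) = ((m-2)x² - (m-4)x)/2`. -/
def polygonal (m x : ℤ) : ℤ := ((m - 2) * x ^ 2 - (m - 4) * x) / 2

/-!
Since `2 P_m(x) = (m - 2) (x² - x) + 2 x`, it suffices to find `x₁, …, x₄` whose weighted sum is `B`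
and whose weighted sum of squares is `2 A + B`, the weights being `1, 2, 2, 3`. In the coordinates
`s = x₂ + x₃`, `d = x₂ - x₃`, `q = x₁ - x₄`, these two equations amount to
`(B - 4 s)² + 6 q² + 8 d² = 16 A + 8 B - B²`, so one needs representations by `x² + 2y² + 6z²`;
when `4 ∤ B`, the congruences required to recover the `xᵢ` can be arranged by changing signs.

That `x² + 2y² + 6z²` represents every `n ≥ 0` with `n ≡ 3 (mod 4)` is proved as in the three
squares theorem. Choose a prime `q ≡ -2 (mod n)` with `q ≡ 1 (mod 3)` and `(n / q) = 1`. By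
Legendre's theorem `n = x² + 2 q w²` and `q = y² + 3 z²` over `ℚ`, so that
`n = x² + 2 (w y)² + 6 (w z)²`. The Davenport–Cassels descent makes the representation integral,
once `y² + 3z²` is replaced by the Eisenstein norm `a² + ab + b²`, which has the same integral
values but a denser lattice.
-/

/-! ### Legendre's theorem -/

section Pigeonhole

variable {ι G : Type*} [Fintype ι] [AddGroup G] [Finite G]

theorem exists_ne_zero_map_eq_zero_abs_le (f : (ι → ℤ) →+ G) (B : ι → ℕ)
    (hB : Nat.card G < ∏ i, (B i + 1)) :
    ∃ v : ι → ℤ, v ≠ 0 ∧ f v = 0 ∧ ∀ i, |v i| ≤ B i := by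
  classical
  have := Fintype.ofFinite G
  let box : Finset (ι → ℤ) := Fintype.piFinset fun i ↦ Finset.Icc 0 (B i : ℤ)
  have hbox : (Finset.univ : Finset G).card < box.card := by
    simpa [box, Fintype.card_piFinset, Nat.card_eq_fintype_card] using hB
  obtain ⟨u, hu, w, hw, huw, hf⟩ :=
    Finset.exists_ne_map_eq_of_card_lt_of_maps_to hbox (f := f) fun _ _ ↦ Finset.mem_univ _
  refine ⟨u - w, sub_ne_zero.2 huw, by rw [map_sub, hf, sub_self], fun i ↦ ?_⟩
  have hui := Finset.mem_Icc.1 (Fintype.mem_piFinset.1 hu i)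
  have hwi := Finset.mem_Icc.1 (Fintype.mem_piFinset.1 hw i)
  rw [Pi.sub_apply, abs_le]
  constructor <;> linarith

theorem exists_ne_zero_map_eq_zero_sq_le [Nonempty ι] (f : (ι → ℤ) →+ G) (N : ι → ℕ)
    (hN : Nat.card G ^ 2 ≤ ∏ i, N i) :
    ∃ v : ι → ℤ, v ≠ 0 ∧ f v = 0 ∧ ∀ i, v i ^ 2 ≤ N i := by
  have hpos : ∀ i, 0 < N i := fun i ↦ Nat.pos_of_ne_zero fun h ↦ by
    have hcard : 0 < Nat.card G ^ 2 := pow_pos Nat.card_pos 2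
    rw [Finset.prod_eq_zero (Finset.mem_univ i) h] at hN
    omega
  have hsqrt : Nat.card G < ∏ i, ((N i).sqrt + 1) := by
    refine lt_of_pow_lt_pow_left₀ 2 (Nat.zero_le _) (hN.trans_lt ?_)
    rw [← Finset.prod_pow]
    exact Finset.prod_lt_prod_of_nonempty (fun i _ ↦ hpos i)
      (fun i _ ↦ Nat.lt_succ_sqrt' (N i)) Finset.univ_nonempty
  obtain ⟨v, hv, hfv, hle⟩ := exists_ne_zero_map_eq_zero_abs_le f _ hsqrt
  refine ⟨v, hv, hfv, fun i ↦ ?_⟩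
  calc v i ^ 2 = |v i| ^ 2 := (sq_abs _).symm
    _ ≤ ((N i).sqrt : ℤ) ^ 2 := pow_le_pow_left₀ (abs_nonneg _) (hle i) 2
    _ ≤ N i := mod_cast Nat.sqrt_le' (N i)

end Pigeonhole

theorem exists_ne_zero_dvd_sq_sub_mul_sq_add_mul_sq {a b : ℕ} (ha₀ : a ≠ 0) (hb₀ : b ≠ 0)
    (hab : a.Coprime b) (ha : IsSquare (a : ZMod b)) (hb : IsSquare (-b : ZMod a)) :
    ∃ x t w : ℤ, (x ≠ 0 ∨ t ≠ 0 ∨ w ≠ 0) ∧ x ^ 2 ≤ a * b ∧ t ^ 2 ≤ b ∧ w ^ 2 ≤ a ∧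
      (a * b : ℤ) ∣ x ^ 2 - a * t ^ 2 + b * w ^ 2 := by
  have := NeZero.mk ha₀
  have := NeZero.mk hb₀
  obtain ⟨α, hα⟩ := ha
  obtain ⟨β, hβ⟩ := hb
  let f : (Fin 3 → ℤ) →+ ZMod b × ZMod a :=
    { toFun v := (v 0 - α * v 1, v 0 - β * v 2)
      map_zero' := by simp
      map_add' u v := by
        ext <;> simp only [Pi.add_apply, Int.cast_add, Prod.mk_add_mk] <;> ring }
  obtain ⟨v, hv, hfv, hle⟩ := exists_ne_zero_map_eq_zero_sq_le f ![a * b, b, a] (by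
    rw [Nat.card_prod, Nat.card_zmod, Nat.card_zmod, Fin.prod_univ_three]
    exact le_of_eq (by simp only [Matrix.cons_val]; ring))
  obtain ⟨hα₀, hβ₀⟩ : (v 0 - α * v 1 : ZMod b) = 0 ∧ (v 0 - β * v 2 : ZMod a) = 0 :=
    Prod.mk.inj hfv
  refine ⟨v 0, v 1, v 2, ?_, by simpa using hle 0, by simpa using hle 1, by simpa using hle 2,
    IsCoprime.mul_dvd (Nat.isCoprime_iff_coprime.2 hab) ?_ ?_⟩
  · by_contra! h
    exact hv (funext fun i ↦ by fin_cases i <;> simp [h])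
  · rw [← ZMod.intCast_zmod_eq_zero_iff_dvd]
    push_cast [ZMod.natCast_self]
    linear_combination (v 0 + β * v 2 : ZMod a) * hβ₀ - (v 2 ^ 2 : ZMod a) * hβ
  · rw [← ZMod.intCast_zmod_eq_zero_iff_dvd]
    push_cast [ZMod.natCast_self]
    linear_combination (v 0 + α * v 1 : ZMod b) * hα₀ - (v 1 ^ 2 : ZMod b) * hα

theorem exists_mul_sq_eq_sq_add_mul_sq {a b : ℕ} (hab : a.Coprime b) (hb_sq : ¬ IsSquare b)
    (ha : IsSquare (a : ZMod b)) (hb : IsSquare (-b : ZMod a)) :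
    ∃ t x w : ℤ, t ≠ 0 ∧ a * t ^ 2 = x ^ 2 + b * w ^ 2 := by
  by_cases ha_sq : IsSquare a
  · obtain ⟨c, rfl⟩ := ha_sq
    exact ⟨1, c, 0, one_ne_zero, by push_cast; ring⟩
  have ha₀ : a ≠ 0 := fun h ↦ ha_sq (h ▸ IsSquare.zero)
  have hb₀ : b ≠ 0 := fun h ↦ hb_sq (h ▸ IsSquare.zero)
  obtain ⟨x, t, w, hne, hx, ht, hw, k, hk⟩ :=
    exists_ne_zero_dvd_sq_sub_mul_sq_add_mul_sq ha₀ hb₀ hab ha hb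
  have sq_ne {c : ℕ} (hc : ¬ IsSquare c) (z : ℤ) : z ^ 2 ≠ c := fun h ↦
    hc (Int.isSquare_natCast_iff.1 ⟨z, by rw [← h, sq]⟩)
  have ha_pos : (0 : ℤ) < a := by positivity
  have ht' : a * t ^ 2 < a * b := by gcongr; exact ht.lt_of_ne (sq_ne hb_sq t)
  have hw' : b * w ^ 2 < b * a := by gcongr; exact hw.lt_of_ne (sq_ne ha_sq w)
  have hbw : 0 ≤ b * w ^ 2 := by positivity
  have hk_gt : -1 < k := by
    refine lt_of_mul_lt_mul_left (a := (a * b : ℤ)) ?_ (by positivity)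
    linarith [sq_nonneg x]
  have hk_lt : k < 2 := by
    refine lt_of_mul_lt_mul_left (a := (a * b : ℤ)) ?_ (by positivity)
    linarith [mul_nonneg ha_pos.le (sq_nonneg t)]
  obtain rfl | rfl : k = 0 ∨ k = 1 := by omega
  · refine ⟨t, x, w, ?_, by linear_combination -hk⟩
    rintro rfl
    have hx₀ : x = 0 := by
      rw [← sq_eq_zero_iff]
      linarith [sq_nonneg x]
    have hw₀ : w = 0 := by simpa [hx₀, hb₀] using hk
    simp [hx₀, hw₀] at hne
  · -- `(x² + b w²) (t² + b)` is again of the form `X² + b W²`, and here it is `a (t² + b)²`.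
    have ht_pos : 0 < t ^ 2 + b := by positivity
    refine ⟨t ^ 2 + b, x * t + b * w, w * t - x, ht_pos.ne', ?_⟩
    linear_combination -(t ^ 2 + b : ℤ) * hk

/-! ### The auxiliary prime -/

theorem exists_prime_natCast_zmod_eq {m k : ℕ} [NeZero m] [NeZero k] (hmk : m.Coprime k)
    {a : ZMod m} {b : ZMod k} (ha : IsUnit a) (hb : IsUnit b) :
    ∃ p : ℕ, p.Prime ∧ (p : ZMod m) = a ∧ (p : ZMod k) = b := by
  let e := ZMod.chineseRemainder hmk
  have hab : IsUnit (e.symm (a, b)) := (Prod.isUnit_iff.2 ⟨ha, hb⟩).map e.symm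
  obtain ⟨p, -, hp, hpe⟩ := Nat.forall_exists_prime_gt_and_eq_mod hab 0
  have hpab : (p : ZMod m × ZMod k) = (a, b) := by
    rw [← e.apply_symm_apply (a, b), ← hpe, map_natCast]
  exact ⟨p, hp, congr_arg Prod.fst hpab, congr_arg Prod.snd hpab⟩

theorem isSquare_natCast_zmod_mul {m k a : ℕ} (hmk : m.Coprime k) (hm : IsSquare (a : ZMod m))
    (hk : IsSquare (a : ZMod k)) : IsSquare (a : ZMod (m * k)) := by
  obtain ⟨x, hx⟩ := hm
  obtain ⟨y, hy⟩ := hk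
  have hsq : IsSquare (a : ZMod m × ZMod k) := ⟨(x, y), Prod.ext hx hy⟩
  simpa only [map_natCast] using hsq.map (ZMod.chineseRemainder hmk).symm

theorem isSquare_neg_three_of_mod_three_eq_one {q : ℕ} [Fact q.Prime] (hq : q % 3 = 1) :
    IsSquare (-3 : ZMod q) := by
  have h3 : 3 ∣ Fintype.card (ZMod q)ˣ := by
    rw [ZMod.card_units]
    omega
  obtain ⟨u, hu⟩ := exists_prime_orderOf_dvd_card 3 h3
  have hu3 : (u : ZMod q) ^ 3 = 1 := by
    rw [← Units.val_pow_eq_pow_val, ← hu, pow_orderOf_eq_one, Units.val_one]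
  have hu1 : (u : ZMod q) - 1 ≠ 0 := by
    rw [sub_ne_zero, Ne, Units.val_eq_one, ← orderOf_eq_one_iff, hu]
    decide
  have hcyc : (u : ZMod q) ^ 2 + u + 1 = 0 :=
    mul_left_cancel₀ hu1 (by linear_combination hu3)
  exact ⟨2 * u + 1, by linear_combination -4 * hcyc⟩

theorem jacobiSym_eq_one_of_dvd_add_two {n q : ℕ} (hn : n % 4 = 3) (hnq : n ∣ q + 2)
    (hq : q % 4 = n / 2 % 4) : jacobiSym n q = 1 := by
  have hn_odd : Odd n := Nat.odd_iff.2 (by omega)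
  have hqn : jacobiSym q n = ZMod.χ₈' n := by
    rw [← jacobiSym.at_neg_two hn_odd]
    refine jacobiSym.mod_left' (Int.ModEq.symm ?_)
    rw [Int.modEq_iff_dvd, sub_neg_eq_add]
    exact_mod_cast hnq
  rw [← ZMod.natCast_mod] at hqn
  obtain hn8 | hn8 : n % 8 = 3 ∨ n % 8 = 7 := by omega
  · rw [← jacobiSym.quadratic_reciprocity_one_mod_four (by omega) hn_odd, hqn, hn8]
    rfl
  · rw [jacobiSym.quadratic_reciprocity_three_mod_four hn (by omega), hqn, hn8]
    rfl

theorem exists_prime_dvd_add_two_and_isSquare {n : ℕ} (hn : n % 4 = 3) :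
    ∃ q : ℕ, q.Prime ∧ Odd q ∧ q % 3 = 1 ∧ n ∣ q + 2 ∧ IsSquare (n : ZMod q) := by
  have hn_odd : Odd n := Nat.odd_iff.2 (by omega)
  have h3n : Nat.Coprime 2 (3 * n) := Nat.coprime_two_left.2 (Nat.odd_mul.2 ⟨by decide, hn_odd⟩)
  have hn_half : (n / 2).Coprime 2 := Nat.coprime_two_right.2 (Nat.odd_iff.2 (by omega))
  have : NeZero (3 * n) := ⟨by omega⟩
  obtain ⟨q, hq, hq3n, hq4⟩ := exists_prime_natCast_zmod_eq (m := 3 * n) (k := 4)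
    (h3n.symm.pow_right 2) (a := -2) (b := (n / 2 : ℕ))
    (by rw [IsUnit.neg_iff]; exact_mod_cast (ZMod.isUnit_iff_coprime 2 _).2 h3n)
    ((ZMod.isUnit_iff_coprime _ 4).2 (hn_half.pow_right 2))
  have hdvd : 3 * n ∣ q + 2 := by
    rw [← ZMod.natCast_eq_zero_iff]
    push_cast
    rw [hq3n, neg_add_cancel]
  have hq4' : q % 4 = n / 2 % 4 := (ZMod.natCast_eq_natCast_iff' _ _ _).1 hq4
  have hnq : n ∣ q + 2 := (dvd_mul_left n 3).trans hdvd
  have := Fact.mk hq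
  refine ⟨q, hq, Nat.odd_iff.2 (by omega), ?_, hnq, ?_⟩
  · have h3q : 3 ∣ q + 2 := (dvd_mul_right 3 n).trans hdvd
    omega
  · have hjacobi := jacobiSym_eq_one_of_dvd_add_two hn hnq hq4'
    exact_mod_cast ZMod.isSquare_of_jacobiSym_eq_one hjacobi

/-! ### The Davenport–Cassels theorem -/

theorem exists_map_eq_of_map_eq_mul_sq {M : Type*} [AddCommGroup M] {Q : QuadraticForm ℤ M}
    (hQ : Q.Anisotropic)
    (hdiv : ∀ (x : M) (T : ℕ), 0 < T → ∃ y : M, |Q (x - (T : ℤ) • y)| < (T : ℤ) ^ 2)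
    {n : ℤ} {T : ℕ} (hT : 0 < T) {x : M} (hx : Q x = n * (T : ℤ) ^ 2) : ∃ y, Q y = n := by
  -- The line through `x / T` and a nearby lattice point `y` meets the quadric `Q = n` again at a
  -- point whose denominator `S` is smaller than `T`.
  induction T using Nat.strong_induction_on generalizing x with
  | _ T ih =>
  obtain ⟨y, hy⟩ := hdiv x T hT
  have hcomb (α β : ℤ) :
      Q (α • x + β • y) = α ^ 2 * Q x + α * β * QuadraticMap.polar Q x y + β ^ 2 * Q y := by
    rw [QuadraticMap.map_add Q, QuadraticMap.map_smul, QuadraticMap.map_smul,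
      QuadraticMap.polar_smul_left, QuadraticMap.polar_smul_right]
    simp only [smul_eq_mul]
    ring
  set p := QuadraticMap.polar Q x y
  set S : ℤ := n * T - p + T * Q y with hS
  have hTS : Q (x - (T : ℤ) • y) = T * S := by
    rw [show x - (T : ℤ) • y = (1 : ℤ) • x + (-T : ℤ) • y by module, hcomb, hx]
    ring
  have hT' : (0 : ℤ) < T := mod_cast hT
  rcases eq_or_ne S 0 with hS₀ | hS₀
  · have hxy : x = (T : ℤ) • y := sub_eq_zero.1 (hQ _ (by rw [hTS, hS₀, mul_zero]))
    refine ⟨y, mul_right_cancel₀ (pow_ne_zero 2 hT'.ne') ?_⟩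
    rw [← hx, hxy, QuadraticMap.map_smul, smul_eq_mul]
    ring
  · have hS_lt : S.natAbs < T := by
      rw [hTS, abs_mul, abs_of_pos hT', sq] at hy
      zify
      exact lt_of_mul_lt_mul_left hy hT'.le
    refine ih S.natAbs hS_lt (Int.natAbs_pos.2 hS₀) (x := (Q y - n) • x + (2 * n * T - p) • y) ?_
    rw [hcomb, hx, Int.natAbs_sq, hS]
    ring

/-! ### Representation by `x² + 2y² + 6z²` -/

/-- The norm form `a² + ab + b²` of the Eisenstein integers `a - bω`, where `ω² + ω + 1 = 0`. -/
def eisensteinForm : QuadraticForm ℤ (ℤ × ℤ) :=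
  QuadraticMap.linMulLin (.fst ℤ ℤ ℤ) (.fst ℤ ℤ ℤ + .snd ℤ ℤ ℤ) +
    QuadraticMap.linMulLin (.snd ℤ ℤ ℤ) (.snd ℤ ℤ ℤ)

theorem eisensteinForm_apply (a b : ℤ) : eisensteinForm (a, b) = a ^ 2 + a * b + b ^ 2 := by
  simp only [eisensteinForm, add_apply, QuadraticMap.linMulLin_apply,
    LinearMap.add_apply, LinearMap.fst_apply, LinearMap.snd_apply]
  ring

theorem four_mul_eisensteinForm (a b : ℤ) :
    4 * eisensteinForm (a, b) = (2 * a + b) ^ 2 + 3 * b ^ 2 := by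
  rw [eisensteinForm_apply]
  ring

theorem eisensteinForm_nonneg (v : ℤ × ℤ) : 0 ≤ eisensteinForm v := by
  linarith [four_mul_eisensteinForm v.1 v.2, sq_nonneg (2 * v.1 + v.2), sq_nonneg v.2]

theorem eisensteinForm_anisotropic : eisensteinForm.Anisotropic := by
  rintro ⟨a, b⟩ h
  have hsum := four_mul_eisensteinForm a b
  have hb : b = 0 := by
    rw [← sq_eq_zero_iff]
    nlinarith [sq_nonneg (2 * a + b), sq_nonneg b]
  have ha : a = 0 := by
    rw [h, hb] at hsum
    rw [← sq_eq_zero_iff]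
    linarith
  rw [ha, hb, Prod.mk_zero_zero]

theorem exists_eisensteinForm_eq_sq_add_three_mul_sq (v : ℤ × ℤ) :
    ∃ y z : ℤ, eisensteinForm v = y ^ 2 + 3 * z ^ 2 := by
  obtain ⟨a, b⟩ := v
  simp only [eisensteinForm_apply]
  rcases Int.even_or_odd' a with ⟨c, rfl | rfl⟩
  · exact ⟨b + c, c, by ring⟩
  · rcases Int.even_or_odd' b with ⟨d, rfl | rfl⟩
    · exact ⟨2 * c + 1 + d, d, by ring⟩
    · exact ⟨c - d, c + d + 1, by ring⟩

theorem three_mul_eisensteinForm_le {a b c : ℤ} (ha : 0 ≤ a) (hb : 0 ≤ b) (hac : a ≤ c)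
    (hbc : b ≤ c) : 3 * eisensteinForm (a, b) ≤ (a + b + c) ^ 2 := by
  rw [eisensteinForm_apply]
  nlinarith [mul_le_mul hac hbc hb (ha.trans hac), mul_le_mul_of_nonneg_left hac ha,
    mul_le_mul_of_nonneg_left hbc hb]

theorem exists_three_mul_eisensteinForm_sub_le_of_add_le {T : ℤ} {v : ℤ × ℤ} (hv : 0 ≤ v)
    (hvT : v.1 + v.2 ≤ T) : ∃ w : ℤ × ℤ, 3 * eisensteinForm (v - T • w) ≤ T ^ 2 := by
  obtain ⟨a, b⟩ := v
  obtain ⟨ha, hb⟩ : 0 ≤ a ∧ 0 ≤ b := hv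
  obtain ⟨c, rfl⟩ : ∃ c, T = a + b + c := ⟨T - a - b, by ring⟩
  have hc : 0 ≤ c := by simpa using hvT
  -- `(a, b, c) / T` are the barycentric coordinates of `v / T` in the triangle with vertices
  -- `(1, 0)`, `(0, 1)`, `(0, 0)`, which is equilateral for this form: take as `w` the vertex of
  -- largest coordinate.
  obtain ⟨hac, hbc⟩ | ⟨hab, hcb⟩ | ⟨hba, hca⟩ :
      (a ≤ c ∧ b ≤ c) ∨ (a ≤ b ∧ c ≤ b) ∨ (b ≤ a ∧ c ≤ a) := by omega
  · have hle := three_mul_eisensteinForm_le ha hb hac hbc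
    exact ⟨(0, 0), by simpa using hle⟩
  · have hle := three_mul_eisensteinForm_le ha hc hab hcb
    refine ⟨(0, 1), ?_⟩
    simp only [Prod.smul_mk, Prod.mk_sub_mk, eisensteinForm_apply, smul_eq_mul] at hle ⊢
    linarith
  · have hle := three_mul_eisensteinForm_le hb hc hba hca
    refine ⟨(1, 0), ?_⟩
    simp only [Prod.smul_mk, Prod.mk_sub_mk, eisensteinForm_apply, smul_eq_mul] at hle ⊢
    linarith

theorem exists_three_mul_eisensteinForm_sub_le (v : ℤ × ℤ) {T : ℤ} (hT : 0 < T) :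
    ∃ w : ℤ × ℤ, 3 * eisensteinForm (v - T • w) ≤ T ^ 2 := by
  let r : ℤ × ℤ := (v.1 % T, v.2 % T)
  let d : ℤ × ℤ := (v.1 / T, v.2 / T)
  have hr : 0 ≤ r := ⟨Int.emod_nonneg _ hT.ne', Int.emod_nonneg _ hT.ne'⟩
  have hv : v = r + T • d := by
    ext
    · exact (Int.emod_add_mul_ediv _ _).symm
    · exact (Int.emod_add_mul_ediv _ _).symm
  rcases le_total (r.1 + r.2) T with h | h
  · obtain ⟨w, hw⟩ := exists_three_mul_eisensteinForm_sub_le_of_add_le hr h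
    refine ⟨d + w, ?_⟩
    rwa [hv, show r + T • d - T • (d + w) = r - T • w by module]
  · have hr' : 0 ≤ (T, T) - r :=
      ⟨sub_nonneg.2 (Int.emod_lt_of_pos _ hT).le, sub_nonneg.2 (Int.emod_lt_of_pos _ hT).le⟩
    have h' : ((T, T) - r).1 + ((T, T) - r).2 ≤ T := by
      simp only [Prod.fst_sub, Prod.snd_sub]
      linarith
    obtain ⟨w, hw⟩ := exists_three_mul_eisensteinForm_sub_le_of_add_le hr' h'
    refine ⟨d + (1, 1) - w, ?_⟩
    have hneg : v - T • (d + (1, 1) - w) = -((T, T) - r - T • w) := by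
      rw [hv, show ((T, T) : ℤ × ℤ) = T • (1, 1) by simp]
      module
    rwa [hneg, QuadraticMap.map_neg]

theorem exists_four_mul_sub_sq_le (x : ℤ) {T : ℕ} (hT : 0 < T) :
    ∃ y : ℤ, 4 * (x - T * y) ^ 2 ≤ (T : ℤ) ^ 2 := by
  refine ⟨x.bdiv T, ?_⟩
  rw [← Int.bmod_eq_self_sub_mul_bdiv]
  have hle := Int.le_bmod (x := x) hT
  have hlt := Int.bmod_lt (x := x) hT
  rw [show 4 * x.bmod T ^ 2 = (2 * x.bmod T) ^ 2 by ring]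
  exact sq_le_sq' (by omega) (by omega)

/-- The form `x² + 2(a² + ab + b²)`. It represents the same integers as `x² + 2y² + 6z²`,
but unlike that form it satisfies the Euclidean condition of the Davenport–Cassels theorem. -/
def ternaryForm : QuadraticForm ℤ (ℤ × ℤ × ℤ) :=
  QuadraticMap.sq.prod (2 • eisensteinForm)

theorem ternaryForm_apply (x : ℤ) (v : ℤ × ℤ) :
    ternaryForm (x, v) = x ^ 2 + 2 * eisensteinForm v := by
  simp [ternaryForm, sq]

theorem ternaryForm_anisotropic : ternaryForm.Anisotropic := by
  rintro ⟨x, v⟩ h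
  rw [ternaryForm_apply] at h
  have hv₀ := eisensteinForm_nonneg v
  have hx : x = 0 := by
    rw [← sq_eq_zero_iff]
    linarith [sq_nonneg x]
  have hv : v = 0 := eisensteinForm_anisotropic v (by linarith [sq_nonneg x])
  rw [hx, hv, Prod.mk_zero_zero]

theorem exists_abs_ternaryForm_sub_lt (u : ℤ × ℤ × ℤ) {T : ℕ} (hT : 0 < T) :
    ∃ w, |ternaryForm (u - (T : ℤ) • w)| < (T : ℤ) ^ 2 := by
  have hT' : (0 : ℤ) < T := mod_cast hT
  obtain ⟨y, hy⟩ := exists_four_mul_sub_sq_le u.1 hT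
  obtain ⟨w, hw⟩ := exists_three_mul_eisensteinForm_sub_le u.2 hT'
  refine ⟨(y, w), ?_⟩
  have heq : ternaryForm (u - (T : ℤ) • (y, w)) =
      (u.1 - T * y) ^ 2 + 2 * eisensteinForm (u.2 - (T : ℤ) • w) := ternaryForm_apply _ _
  have hnonneg := eisensteinForm_nonneg (u.2 - (T : ℤ) • w)
  rw [heq, abs_of_nonneg (by positivity)]
  linarith [pow_pos hT' 2]

theorem not_isSquare_two_mul_of_odd {q : ℕ} (hq : Odd q) : ¬ IsSquare (2 * q) := by
  rintro ⟨c, hc⟩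
  obtain ⟨e, rfl⟩ : 2 ∣ c := or_self_iff.1 (Nat.prime_two.dvd_mul.1 (hc ▸ dvd_mul_right 2 q))
  obtain ⟨k, rfl⟩ := hq
  rw [mul_mul_mul_comm] at hc
  omega

theorem exists_ternaryForm_eq_mul_sq {n : ℕ} (hn : n % 4 = 3) :
    ∃ (u : ℤ × ℤ × ℤ) (T : ℤ), T ≠ 0 ∧ ternaryForm u = n * T ^ 2 := by
  obtain ⟨q, hq, hq_odd, hq3, hnq, hnq_sq⟩ := exists_prime_dvd_add_two_and_isSquare hn
  have := Fact.mk hq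
  have hn2 : n.Coprime 2 := Nat.coprime_two_right.2 (Nat.odd_iff.2 (by omega))
  have hn2q : n.Coprime (2 * q) := by
    refine hn2.mul_right (Nat.Coprime.of_dvd_left hnq ?_)
    rwa [Nat.coprime_self_add_left, Nat.coprime_two_left]
  have hn_sq : IsSquare (n : ZMod (2 * q)) :=
    isSquare_natCast_zmod_mul (Nat.coprime_two_left.2 hq_odd)
      (FiniteField.isSquare_of_char_two (ZMod.ringChar_zmod_n 2) _) hnq_sq
  have h2q_sq : IsSquare (-(2 * q : ℕ) : ZMod n) := by
    have hq_eq : (q + 2 : ZMod n) = 0 := by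
      exact_mod_cast (ZMod.natCast_eq_zero_iff (q + 2) n).2 hnq
    refine ⟨2, ?_⟩
    push_cast
    linear_combination -2 * hq_eq
  obtain ⟨T, X, W, hT, hTXW⟩ :=
    exists_mul_sq_eq_sq_add_mul_sq hn2q (not_isSquare_two_mul_of_odd hq_odd) hn_sq h2q_sq
  have hq3_coprime : q.Coprime 3 := by
    rw [Nat.coprime_comm, Nat.prime_three.coprime_iff_not_dvd]
    omega
  have hq_sq : IsSquare (q : ZMod 3) := by
    rw [← ZMod.natCast_mod, hq3, Nat.cast_one]
    exact IsSquare.one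
  obtain ⟨S, Y, Z, hS, hSYZ⟩ := exists_mul_sq_eq_sq_add_mul_sq (a := q) (b := 3)
    hq3_coprime Nat.prime_three.not_isSquare hq_sq (isSquare_neg_three_of_mod_three_eq_one hq3)
  refine ⟨(X * S, W * (Y - Z), W * (2 * Z)), T * S, mul_ne_zero hT hS, ?_⟩
  rw [ternaryForm_apply, eisensteinForm_apply]
  push_cast at hTXW hSYZ
  linear_combination -S ^ 2 * hTXW - 2 * W ^ 2 * hSYZ

theorem exists_sq_add_two_mul_sq_add_six_mul_sq_eq {n : ℤ} (hn₀ : 0 ≤ n) (hn : n % 4 = 3) :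
    ∃ x y z : ℤ, x ^ 2 + 2 * y ^ 2 + 6 * z ^ 2 = n := by
  lift n to ℕ using hn₀
  obtain ⟨u, T, hT, hu⟩ := exists_ternaryForm_eq_mul_sq (n := n) (by omega)
  rw [← Int.natAbs_sq] at hu
  obtain ⟨⟨x, v⟩, hxv⟩ := exists_map_eq_of_map_eq_mul_sq ternaryForm_anisotropic
    (fun u _ ↦ exists_abs_ternaryForm_sub_lt u) (Int.natAbs_pos.2 hT) hu
  obtain ⟨y, z, hyz⟩ := exists_eisensteinForm_eq_sq_add_three_mul_sq v
  refine ⟨x, y, z, ?_⟩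
  rw [← hxv, ternaryForm_apply, hyz]
  ring

/-! ### Recovering the four variables -/

theorem exists_weighted_sums_eq {A B s d q : ℤ} (hsd : 2 ∣ s - d) (hq : 4 ∣ B - 2 * s - q)
    (h : (B - 4 * s) ^ 2 + 6 * q ^ 2 + 8 * d ^ 2 = 16 * A + 8 * B - B ^ 2) :
    ∃ x₁ x₂ x₃ x₄ : ℤ, x₁ + 2 * x₂ + 2 * x₃ + 3 * x₄ = B ∧
      x₁ ^ 2 + 2 * x₂ ^ 2 + 2 * x₃ ^ 2 + 3 * x₄ ^ 2 = 2 * A + B := by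
  obtain ⟨x₃, hx₃⟩ := hsd
  obtain ⟨x₄, hx₄⟩ := hq
  obtain rfl : s = d + 2 * x₃ := by linarith
  obtain rfl : q = B - 2 * (d + 2 * x₃) - 4 * x₄ := by linarith
  exact ⟨B - 2 * (d + 2 * x₃) - 3 * x₄, d + x₃, x₃, x₄, by ring, by linarith⟩

theorem even_and_odd_of_sq_add_three_mul_sq_mod_four_eq_three {y z : ℤ}
    (h : (y ^ 2 + 3 * z ^ 2) % 4 = 3) : Even y ∧ Odd z := by
  have sq_mod_four (w : ℤ) : Even w ∧ w ^ 2 % 4 = 0 ∨ Odd w ∧ w ^ 2 % 4 = 1 :=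
    (Int.even_or_odd w).imp
      (fun h ↦ ⟨h, Int.emod_eq_zero_of_dvd (pow_dvd_pow_of_dvd h.two_dvd 2)⟩)
      (fun h ↦ ⟨h, Int.sq_mod_four_eq_one_of_odd h⟩)
  obtain ⟨hy, hy4⟩ | ⟨-, hy4⟩ := sq_mod_four y <;> obtain ⟨-, hz4⟩ | ⟨hz, hz4⟩ := sq_mod_four z
  · omega
  · exact ⟨hy, hz⟩
  · omega
  · omega

theorem exists_sq_eq_sq_and_four_dvd_sub {x c : ℤ} (hx : Odd x) (hc : Odd c) :
    ∃ r, r ^ 2 = x ^ 2 ∧ 4 ∣ c - r := by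
  rcases Int.four_dvd_add_or_sub_of_odd hc hx with h | h
  · exact ⟨-x, neg_sq x, by rwa [sub_neg_eq_add]⟩
  · exact ⟨x, rfl, h⟩

theorem exists_weighted_sums_eq_of_odd {A B : ℤ} (hB : Odd B)
    (hd : 0 ≤ 16 * A + 8 * B - B ^ 2) :
    ∃ x₁ x₂ x₃ x₄ : ℤ, x₁ + 2 * x₂ + 2 * x₃ + 3 * x₄ = B ∧
      x₁ ^ 2 + 2 * x₂ ^ 2 + 2 * x₃ ^ 2 + 3 * x₄ ^ 2 = 2 * A + B := by
  obtain ⟨β, hβ⟩ := Int.eight_dvd_sq_sub_one_of_odd hB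
  obtain ⟨x, y, z, hxyz⟩ := exists_sq_add_two_mul_sq_add_six_mul_sq_eq hd (by omega)
  have hx : Odd x := by
    rw [← Int.odd_pow' two_ne_zero, Int.odd_iff]
    omega
  have hx8 := Int.eight_dvd_sq_sub_one_of_odd hx
  obtain ⟨hy, hz⟩ := even_and_odd_of_sq_add_three_mul_sq_mod_four_eq_three (y := y) (z := z)
    (by omega)
  obtain ⟨d, rfl⟩ := even_iff_exists_two_mul.1 hy
  obtain ⟨r, hrx, s, hs⟩ := exists_sq_eq_sq_and_four_dvd_sub hx hB
  obtain ⟨q, hqz, hq⟩ := exists_sq_eq_sq_and_four_dvd_sub hz (hB.sub_even (even_two_mul s))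
  obtain rfl : r = B - 4 * s := by linarith
  rw [← hrx, ← hqz] at hxyz
  refine exists_weighted_sums_eq (d := d) ?_ hq (by linarith)
  obtain ⟨κ, hκ⟩ := Int.eight_dvd_sq_sub_one_of_odd hz
  have heven : Even (B * s - d ^ 2) := by
    have hBsd : B * s - d ^ 2 = 2 * (β + 3 * κ + s ^ 2 - A) + (1 - B) := by linarith
    rw [hBsd]
    exact (even_two_mul _).add (odd_one.sub_odd hB)
  have hsd : Even (s - d) := by
    simpa [Int.even_sub, Int.even_mul, Int.even_pow, Int.not_even_iff_odd.2 hB] using heven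
  exact hsd.two_dvd

theorem exists_weighted_sums_eq_of_mod_four_eq_two {A B : ℤ} (hB : B % 4 = 2)
    (hd : 0 ≤ 16 * A + 8 * B - B ^ 2) :
    ∃ x₁ x₂ x₃ x₄ : ℤ, x₁ + 2 * x₂ + 2 * x₃ + 3 * x₄ = B ∧
      x₁ ^ 2 + 2 * x₂ ^ 2 + 2 * x₃ ^ 2 + 3 * x₄ ^ 2 = 2 * A + B := by
  obtain ⟨b, rfl⟩ : 2 ∣ B := by omega
  have hb : Odd b := Int.odd_iff.2 (by omega)
  have hb4 := Int.sq_mod_four_eq_one_of_odd hb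
  obtain ⟨x, y, z, hxyz⟩ :=
    exists_sq_add_two_mul_sq_add_six_mul_sq_eq (n := 4 * A + 4 * b - b ^ 2)
      (by linarith) (by omega)
  have hx : Odd x := by
    rw [← Int.odd_pow' two_ne_zero, Int.odd_iff]
    omega
  have hx4 := Int.sq_mod_four_eq_one_of_odd hx
  have hyz : Odd (y + z) := by
    have hsq : Odd (y ^ 2 + z ^ 2) := by
      rw [Int.odd_iff]
      omega
    simpa [Int.odd_add, Int.odd_pow, Int.even_pow] using hsq
  obtain ⟨r, hrx, t, ht⟩ := exists_sq_eq_sq_and_four_dvd_sub hx (hb.sub_even (even_two_mul y))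
  obtain rfl : r = b - 2 * (y + 2 * t) := by linarith
  refine exists_weighted_sums_eq (s := y + 2 * t) (d := y) (q := 2 * z) ⟨t, by ring⟩ ?_
    (by linarith)
  rw [Int.odd_iff] at hb hyz
  omega

theorem two_mul_polygonal (m x : ℤ) : 2 * polygonal m x = (m - 2) * x ^ 2 - (m - 4) * x := by
  refine Int.mul_ediv_cancel' ?_
  obtain ⟨k, hk⟩ := (Int.even_mul_pred_self x).two_dvd
  exact ⟨(m - 2) * k + x, by linear_combination (m - 2) * hk⟩

theorem polygonal_weighted_sum_eq {A B x₁ x₂ x₃ x₄ : ℤ} (m : ℤ)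
    (hlin : x₁ + 2 * x₂ + 2 * x₃ + 3 * x₄ = B)
    (hsq : x₁ ^ 2 + 2 * x₂ ^ 2 + 2 * x₃ ^ 2 + 3 * x₄ ^ 2 = 2 * A + B) :
    polygonal m x₁ + 2 * polygonal m x₂ + 2 * polygonal m x₃ + 3 * polygonal m x₄ =
      A * (m - 2) + B := by
  refine mul_left_cancel₀ two_ne_zero ?_
  linear_combination two_mul_polygonal m x₁ + 2 * two_mul_polygonal m x₂ +
    2 * two_mul_polygonal m x₃ + 3 * two_mul_polygonal m x₄ +
    (m - 2) * hsq - (m - 4) * hlin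

theorem rep_1223_general (A B : ℤ) (hd : 0 ≤ 16 * A + 8 * B - B ^ 2) (hmod : ¬ (B % 4 = 0)) :
    ∃ x₁ x₂ x₃ x₄ : ℤ, ∀ m : ℤ,
      polygonal m x₁ + 2 * polygonal m x₂ + 2 * polygonal m x₃ + 3 * polygonal m x₄ =
        A * (m - 2) + B := by
  obtain ⟨x₁, x₂, x₃, x₄, hlin, hsq⟩ : ∃ x₁ x₂ x₃ x₄ : ℤ, x₁ + 2 * x₂ + 2 * x₃ + 3 * x₄ = B ∧
      x₁ ^ 2 + 2 * x₂ ^ 2 + 2 * x₃ ^ 2 + 3 * x₄ ^ 2 = 2 * A + B := by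
    obtain hB | hB : B % 2 = 1 ∨ B % 4 = 2 := by omega
    · exact exists_weighted_sums_eq_of_odd (Int.odd_iff.2 hB) hd
    · exact exists_weighted_sums_eq_of_mod_four_eq_two hB hd
  exact ⟨x₁, x₂, x₃, x₄, fun m ↦ polygonal_weighted_sum_eq m hlin hsq⟩

theorem rep_1223 (m : ℤ) (hm : 3 ≤ m) (A B : ℤ) (hA : 0 ≤ A)
    (hd : 0 ≤ 16 * A + 8 * B - B ^ 2)
    (hmod : ¬ (B % 4 = 0)) :
    ∃ x₁ x₂ x₃ x₄ : ℤ,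
      polygonal m x₁ + 2 * polygonal m x₂ + 2 * polygonal m x₃ + 3 * polygonal m x₄ =
        A * (m - 2) + B := by
  obtain ⟨x₁, x₂, x₃, x₄, h⟩ := rep_1223_general A B hd hmod
  exact ⟨x₁, x₂, x₃, x₄, h m⟩
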